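/- For every integer e ≥ 1 and general points, ℓ(L(10e, 10e−2, 6^{2e})) = 0, i.e. this system contains exactly one curve up to scalar; its virtual dimension is v = −12e − 1, so the system is special. -/

import Mathlib

open MvPolynomial

/-- The iterated partial derivative corresponding to the multi-index `ν`. -/
noncomputable def mderiv (ν : Fin 3 → ℕ) :
    MvPolynomial (Fin 3) ℂ →ₗ[ℂ] MvPolynomial (Fin 3) ℂ :=
  ((pderiv (R := ℂ) (0 : Fin 3)).toLinearMap ^ ν 0) ∘ₗ
  ((pderiv (R := ℂ) (1 : Fin 3)).toLinearMap ^ ν 1) ∘ₗ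
  ((pderiv (R := ℂ) (2 : Fin 3)).toLinearMap ^ ν 2)

/-- The linear system `L(d; m)` of homogeneous forms of degree `d` in three variables
all of whose partial derivatives of order `< m i` vanish at the point `p i`,
i.e. plane curves of degree `d` with multiplicity at least `m i` at `p i`. -/
noncomputable def linSys {k : ℕ} (p : Fin k → Fin 3 → ℂ) (d : ℕ) (m : Fin k → ℕ) :
    Submodule ℂ (MvPolynomial (Fin 3) ℂ) :=
  (homogeneousSubmodule (Fin 3) ℂ d) ⊓
    ⨅ (i : Fin k), ⨅ (ν : Fin 3 → ℕ), ⨅ (_ : ν 0 + ν 1 + ν 2 < m i),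
      LinearMap.ker ((aeval (p i)).toLinearMap ∘ₗ mderiv ν)

/-- The projective dimension `ℓ` of the linear system (`-1` means empty). -/
noncomputable def projDim {k : ℕ} (p : Fin k → Fin 3 → ℂ) (d : ℕ) (m : Fin k → ℕ) : ℤ :=
  (Module.finrank ℂ (linSys p d m) : ℤ) - 1

/-- The virtual dimension `v = d(d+3)/2 - ∑ mᵢ(mᵢ+1)/2`. -/
def virtDim {k : ℕ} (d : ℕ) (m : Fin k → ℕ) : ℤ :=
  ((d : ℤ) * (d + 3)) / 2 - ∑ i : Fin k, ((m i : ℤ) * (m i + 1)) / 2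

/-- The quasi-homogeneous multiplicity vector `(m₀, 6, …, 6)` on `n + 1` points. -/
def qh (n m0 : ℕ) : Fin (n + 1) → ℕ := fun i => if i = 0 then m0 else 6

/-- A property `Q` of configurations of `k` points of `ℙ²` (given by nonzero homogeneous
coordinate vectors) holds for points in general position: there is a nonzero polynomial
in the coordinates such that `Q` holds whenever it does not vanish. -/
def Generically (k : ℕ) (Q : (Fin k → Fin 3 → ℂ) → Prop) : Prop :=
  ∃ P : MvPolynomial (Fin k × Fin 3) ℂ, P ≠ 0 ∧
    ∀ p : Fin k → Fin 3 → ℂ, (∀ i, p i ≠ 0) →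
      eval (fun x => p x.1 x.2) P ≠ 0 → Q p

/-!
For general points let `C` be the curve in `L(e; e - 1, 1^{2e})` and `ℓᵢ` the line through `p₀` and
`pᵢ`. A member `L` of the system has `L · C = -2` and `L · ℓᵢ = -4`, and splitting off these curves
leaves `2C + 4 ∑ ℓᵢ` as the only member.

The curves `C` and `ℓᵢ` exist for every choice of points, by the virtual dimension bound. Since
`ℓ` is upper semicontinuous, uniqueness needs to be checked at one configuration only. For
`p₀ = (0 : 0 : 1)` and `pᵢ = (1 : tᵢ : h(tᵢ))` with `deg h = e`, the curve `C` is the graph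
`z = h(t)`, the lines are `t = tᵢ`, and a member is a quadratic polynomial in `z` with coefficients
in `ℂ[t]`, for which the intersection numbers become degree counts in `t`.
-/

section Derivatives

variable {R σ : Type*}

lemma derivation_apply_mem_pow {A : Type*} [CommSemiring R] [CommSemiring A] [Algebra R A]
    (D : Derivation R A A) (I : Ideal A) {n : ℕ} {a : A} (ha : a ∈ I ^ (n + 1)) :
    D a ∈ I ^ n := by
  induction n generalizing a with
  | zero => simp
  | succ n ih =>
    rw [pow_succ] at ha
    induction ha using Submodule.mul_induction_on' with
    | mem_mul_mem x hx y hy =>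
      rw [D.leibniz, smul_eq_mul, smul_eq_mul, mul_comm y, pow_succ]
      exact add_mem (Ideal.mul_mem_right _ _ (pow_succ I n ▸ hx)) (Ideal.mul_mem_mul (ih hx) hy)
    | add x _ y _ hx hy => exact map_add D x y ▸ add_mem hx hy

lemma derivation_pow_apply_mem_pow {A : Type*} [CommSemiring R] [CommSemiring A] [Algebra R A]
    (D : Derivation R A A) (I : Ideal A) {n k : ℕ} {a : A} (ha : a ∈ I ^ (n + k)) :
    (D.toLinearMap ^ k) a ∈ I ^ n := by
  induction k generalizing a with
  | zero => simpa using ha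
  | succ k ih =>
    rw [pow_succ, Module.End.mul_apply]
    exact ih (derivation_apply_mem_pow D I ha)

lemma commute_pderiv [CommRing R] (i j : σ) :
    Commute (pderiv (R := R) i).toLinearMap (pderiv (R := R) j).toLinearMap := by
  classical
  have h : ⁅pderiv (R := R) i, pderiv (R := R) j⁆ = 0 := by
    ext k : 1
    simp [Derivation.commutator_apply, pderiv_X, Pi.single_apply, apply_ite]
  exact commute_iff_lie_eq.mpr (by rw [← Derivation.commutator_coe_linear_map, h]; rfl)

lemma coeff_pderiv_pow [CommSemiring R] (i : σ) (k : ℕ) (s : σ →₀ ℕ) (F : MvPolynomial σ R) :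
    coeff s (((pderiv i).toLinearMap ^ k) F) =
      (s i + k).descFactorial k * coeff (s + Finsupp.single i k) F := by
  induction k generalizing F with
  | zero => simp
  | succ k ih =>
    rw [pow_succ, Module.End.mul_apply, ih, Derivation.coeFn_coe, coeff_pderiv, add_assoc,
      ← Finsupp.single_add, ← add_assoc (s i), Nat.succ_descFactorial_succ]
    push_cast [Finsupp.add_apply, Finsupp.single_eq_same]
    ring

lemma isHomogeneous_pderiv_pow [CommSemiring R] {F : MvPolynomial σ R} {d : ℕ}
    (hF : F.IsHomogeneous d) (i : σ) (k : ℕ) :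
    (((pderiv i).toLinearMap ^ k) F).IsHomogeneous (d - k) := by
  induction k with
  | zero => simpa using hF
  | succ k ih =>
    rw [pow_succ', Module.End.mul_apply, ← Nat.sub_sub]
    exact ih.pderiv

lemma pderiv_mderiv (i : Fin 3) (ν : Fin 3 →₀ ℕ) (F : MvPolynomial (Fin 3) ℂ) :
    pderiv i (mderiv ν F) = mderiv (ν + Finsupp.single i 1 : Fin 3 →₀ ℕ) F := by
  have hcomm (j : Fin 3) (n : ℕ) (G : MvPolynomial (Fin 3) ℂ) :
      pderiv i (((pderiv j).toLinearMap ^ n) G) = ((pderiv j).toLinearMap ^ n) (pderiv i G) :=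
    DFunLike.congr_fun ((commute_pderiv (R := ℂ) i j).pow_right n).eq G
  have hsucc (n : ℕ) (G : MvPolynomial (Fin 3) ℂ) :
      ((pderiv i).toLinearMap ^ (n + 1)) G = ((pderiv i).toLinearMap ^ n) (pderiv i G) := by
    rw [pow_succ, Module.End.mul_apply, Derivation.coeFn_coe]
  simp only [mderiv, LinearMap.comp_apply]
  obtain rfl | rfl | rfl : i = 0 ∨ i = 1 ∨ i = 2 := by omega
  all_goals simp [hsucc, hcomm]

lemma isHomogeneous_mderiv {F : MvPolynomial (Fin 3) ℂ} {d : ℕ} (hF : F.IsHomogeneous d)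
    (ν : Fin 3 →₀ ℕ) : (mderiv ν F).IsHomogeneous (d - ν.degree) := by
  have h := isHomogeneous_pderiv_pow
    (isHomogeneous_pderiv_pow (isHomogeneous_pderiv_pow hF 2 (ν 2)) 1 (ν 1)) 0 (ν 0)
  convert h using 1
  · rfl
  rw [Finsupp.degree_eq_sum, Fin.sum_univ_three]
  omega

lemma coeff_mderiv (ν s : Fin 3 →₀ ℕ) (F : MvPolynomial (Fin 3) ℂ) :
    coeff s (mderiv ν F) = (∏ i, (s i + ν i).descFactorial (ν i)) * coeff (s + ν) F := by
  have hν : ν = Finsupp.single 0 (ν 0) + Finsupp.single 1 (ν 1) + Finsupp.single 2 (ν 2) := by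
    ext i
    fin_cases i <;> simp
  conv_rhs => rw [hν]
  simp [mderiv, coeff_pderiv_pow, Fin.prod_univ_three, mul_assoc, add_assoc]

lemma coeff_add_eq_zero_of_coeff_mderiv {ν s : Fin 3 →₀ ℕ} {F : MvPolynomial (Fin 3) ℂ}
    (h : coeff s (mderiv ν F) = 0) : coeff (s + ν) F = 0 := by
  rw [coeff_mderiv] at h
  refine (mul_eq_zero.mp h).resolve_left (Nat.cast_ne_zero.mpr ?_)
  exact Finset.prod_ne_zero_iff.mpr fun i _ => by simp [Nat.descFactorial_eq_zero_iff_lt]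

end Derivatives

section Multiplicity

lemma aeval_mem_pow_of_mem_vanishingIdeal_pow {σ K A : Type*} [Field K] [CommRing A] [Algebra K A]
    {g : σ → A} {p : σ → K} {J : Ideal A} (hg : ∀ j, g j - algebraMap K A (p j) ∈ J) {n : ℕ}
    {F : MvPolynomial σ K} (hF : F ∈ vanishingIdeal K {p} ^ n) : aeval g F ∈ J ^ n := by
  have hcongr : (Ideal.Quotient.mkₐ K J).comp (aeval g) =
      (Algebra.ofId K (A ⧸ J)).comp (aeval p) :=
    algHom_ext fun j => by
      simpa [Algebra.ofId_apply] using Ideal.Quotient.eq.mpr (hg j)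
  have hmap : (vanishingIdeal K {p}).map (aeval g) ≤ J := by
    refine Ideal.map_le_iff_le_comap.mpr fun G hG => Ideal.mem_comap.mpr ?_
    have h := DFunLike.congr_fun hcongr G
    rw [AlgHom.comp_apply, AlgHom.comp_apply, (mem_vanishingIdeal_singleton_iff p G).mp hG,
      map_zero] at h
    exact Ideal.Quotient.eq_zero_iff_mem.mp h
  exact Ideal.pow_right_mono hmap n
    (Ideal.map_pow (aeval (R := K) g) _ n ▸ Ideal.mem_map_of_mem _ hF)

/-- The substitution `F(x) ↦ F(x + p)`, which moves the point `p` to the origin. -/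
noncomputable def translateAt {σ R : Type*} [CommSemiring R] (p : σ → R) :
    MvPolynomial σ R →ₐ[R] MvPolynomial σ R :=
  aeval fun j => X j + C (p j)

section Translate

variable {σ R : Type*}

@[simp]
lemma translateAt_X [CommSemiring R] (p : σ → R) (j : σ) :
    translateAt p (X j) = X j + C (p j) :=
  aeval_X _ j

lemma translateAt_neg_translateAt [CommRing R] (p : σ → R) (F : MvPolynomial σ R) :
    translateAt (-p) (translateAt p F) = F := by
  have h : (translateAt (-p)).comp (translateAt p) = AlgHom.id R _ :=
    algHom_ext fun j => by simp
  exact DFunLike.congr_fun h F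

lemma coeff_zero_translateAt [CommSemiring R] (p : σ → R) (F : MvPolynomial σ R) :
    coeff 0 (translateAt p F) = aeval p F := by
  have h : (aeval (0 : σ → R)).comp (translateAt p) = aeval p :=
    algHom_ext fun j => by simp
  simp [← h, ← constantCoeff_eq]

lemma pderiv_translateAt [CommSemiring R] (p : σ → R) (i : σ) (F : MvPolynomial σ R) :
    pderiv i (translateAt p F) = translateAt p (pderiv i F) := by
  classical
  induction F using MvPolynomial.induction_on with
  | C a => simp
  | add f g hf hg => simp [hf, hg]
  | mul_X f j hf =>
    simp [hf, Derivation.leibniz, pderiv_X, Pi.single_apply, apply_ite]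

end Translate

lemma mderiv_translateAt (p : Fin 3 → ℂ) (ν : Fin 3 → ℕ) (F : MvPolynomial (Fin 3) ℂ) :
    mderiv ν (translateAt p F) = translateAt p (mderiv ν F) := by
  have hpow (i : Fin 3) (k : ℕ) (G : MvPolynomial (Fin 3) ℂ) :
      ((pderiv i).toLinearMap ^ k) (translateAt p G) =
        translateAt p (((pderiv i).toLinearMap ^ k) G) := by
    simpa only [Module.End.pow_apply, Derivation.coeFn_coe] using
      (Function.Semiconj.iterate_right (f := translateAt p)
        (fun G => (pderiv_translateAt p i G).symm) k G).symm
  simp only [mderiv, LinearMap.comp_apply, hpow]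

lemma mem_vanishingIdeal_pow_iff {p : Fin 3 → ℂ} {m : ℕ} {F : MvPolynomial (Fin 3) ℂ} :
    F ∈ vanishingIdeal ℂ {p} ^ m ↔
      ∀ ν : Fin 3 →₀ ℕ, ν.degree < m → aeval p (mderiv ν F) = 0 := by
  constructor
  · intro hF ν hν
    obtain ⟨k, rfl⟩ := Nat.exists_eq_add_of_lt hν
    rw [← mem_vanishingIdeal_singleton_iff, ← pow_one (vanishingIdeal ℂ {p})]
    refine derivation_pow_apply_mem_pow _ _ (derivation_pow_apply_mem_pow _ _
      (derivation_pow_apply_mem_pow _ _ (Ideal.pow_le_pow_right ?_ hF)))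
    rw [Finsupp.degree_eq_sum, Fin.sum_univ_three]
    omega
  · intro h
    have horigin : translateAt p F ∈ idealOfVars (Fin 3) ℂ ^ m := by
      refine (mem_pow_idealOfVars_iff' m _).mpr fun s hs => ?_
      rw [← zero_add s]
      apply coeff_add_eq_zero_of_coeff_mderiv
      rw [mderiv_translateAt, coeff_zero_translateAt, h s hs]
    have hmap : (idealOfVars (Fin 3) ℂ).map (translateAt (-p)) ≤ vanishingIdeal ℂ {p} := by
      rw [Ideal.map_span, Ideal.span_le]
      rintro _ ⟨_, ⟨j, rfl⟩, rfl⟩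
      simp
    rw [← translateAt_neg_translateAt p F]
    exact Ideal.pow_right_mono hmap m
      (Ideal.map_pow (translateAt (-p)) _ m ▸ Ideal.mem_map_of_mem _ horigin)

/-- For forms, Euler's identity `∑ xᵢ ∂ᵢG = (deg G) G` recovers the lower order conditions. -/
lemma mem_vanishingIdeal_pow_iff_of_isHomogeneous {p : Fin 3 → ℂ} {m d : ℕ} (hm : m ≤ d + 1)
    {F : MvPolynomial (Fin 3) ℂ} (hF : F.IsHomogeneous d) :
    F ∈ vanishingIdeal ℂ {p} ^ m ↔
      ∀ ν : Fin 3 →₀ ℕ, ν.degree + 1 = m → aeval p (mderiv ν F) = 0 := by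
  rw [mem_vanishingIdeal_pow_iff]
  refine ⟨fun h ν hν => h ν (by omega), fun h => ?_⟩
  have hdesc (k : ℕ) : ∀ ν : Fin 3 →₀ ℕ, ν.degree + k + 1 = m → aeval p (mderiv ν F) = 0 := by
    induction k with
    | zero => exact h
    | succ k ih =>
      intro ν hν
      have heuler := congrArg (aeval p) (isHomogeneous_mderiv hF ν).sum_X_mul_pderiv
      have hnext (i : Fin 3) : aeval p (pderiv i (mderiv ν F)) = 0 := by
        rw [pderiv_mderiv]
        exact ih _ (by rw [map_add, Finsupp.degree_single]; omega)
      have hdeg : d - ν.degree ≠ 0 := by omega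
      rw [map_sum, map_nsmul, nsmul_eq_mul, Finset.sum_eq_zero fun i _ => by
        rw [map_mul, hnext, mul_zero]] at heuler
      exact (mul_eq_zero.mp heuler.symm).resolve_left (Nat.cast_ne_zero.mpr hdeg)
  exact fun ν hν => hdesc (m - ν.degree - 1) ν (by omega)

lemma degree_eq_of_mem_support {R σ : Type*} [CommSemiring R] {F : MvPolynomial σ R} {d : ℕ}
    (hF : F.IsHomogeneous d) {s : σ →₀ ℕ} (hs : s ∈ F.support) : s.degree = d :=
  (hF.degree_eq_sum_deg_support hs).symm

lemma aeval_single_eq_coeff {R σ : Type*} [CommSemiring R] [DecidableEq σ] {F : MvPolynomial σ R}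
    {d : ℕ} (hF : F.IsHomogeneous d) (i : σ) :
    aeval (Pi.single i 1 : σ → R) F = coeff (Finsupp.single i d) F := by
  rw [aeval_def, eval₂_eq, Finset.sum_eq_single (Finsupp.single i d)]
  · rw [Finset.prod_eq_one, mul_one, Algebra.algebraMap_self_apply]
    intro j hj
    obtain rfl : j = i := by simpa using Finsupp.support_single_subset hj
    simp
  · intro s hs hne
    obtain ⟨j, hj, hji⟩ : ∃ j ∈ s.support, j ≠ i := by
      by_contra! hsupp
      have hsi : s = Finsupp.single i (s i) :=
        Finsupp.eq_single_iff.mpr ⟨fun j hj => Finset.mem_singleton.mpr (hsupp j hj), rfl⟩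
      rw [hsi] at hs hne
      exact hne (by rw [← degree_eq_of_mem_support hF hs, Finsupp.degree_single])
    have hpow : (Pi.single i 1 : σ → R) j ^ s j = 0 := by
      rw [Pi.single_eq_of_ne hji, zero_pow (Finsupp.mem_support_iff.mp hj)]
    rw [Finset.prod_eq_zero hj hpow, mul_zero]
  · intro h
    simp [notMem_support_iff.mp h]

lemma coeff_eq_zero_of_mem_vanishingIdeal_single_pow {i : Fin 3} {m d : ℕ}
    {F : MvPolynomial (Fin 3) ℂ} (hF : F.IsHomogeneous d)
    (hFm : F ∈ vanishingIdeal ℂ {(Pi.single i 1 : Fin 3 → ℂ)} ^ m) {s : Fin 3 →₀ ℕ}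
    (hs : (s.erase i).degree < m) : coeff s F = 0 := by
  by_cases hsd : s.degree = d
  · have hdeg : d - (s.erase i).degree = s i := by
      rw [← hsd, ← congrArg Finsupp.degree (Finsupp.single_add_erase i s), map_add,
        Finsupp.degree_single, Nat.add_sub_cancel]
    rw [← Finsupp.single_add_erase i s]
    apply coeff_add_eq_zero_of_coeff_mderiv
    rw [← hdeg, ← aeval_single_eq_coeff (isHomogeneous_mderiv hF _)]
    exact mem_vanishingIdeal_pow_iff.mp hFm _ hs
  · exact hF.coeff_eq_zero hsd

end Multiplicity

section Semicontinuity

/-- The specialization at `x` of a linear map with polynomial coordinates. -/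
noncomputable def specialize {K V ι σ : Type*} [CommSemiring K] [AddCommMonoid V] [Module K V]
    (Φ : V →ₗ[K] ι → MvPolynomial σ K) (x : σ → K) : V →ₗ[K] ι → K :=
  (aeval x).toLinearMap.compLeft ι ∘ₗ Φ

open Module in
/-- The polynomial is the determinant of `g ∘ Φ` on a complement of the kernel at `q`, where `g`
inverts `Φ` there from the left at `q`. -/
lemma exists_eval_ne_zero_finrank_ker_specialize_le {K V ι σ : Type*} [Field K] [AddCommGroup V]
    [Module K V] [FiniteDimensional K V] [Finite ι] (Φ : V →ₗ[K] ι → MvPolynomial σ K)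
    (q : σ → K) :
    ∃ P : MvPolynomial σ K, eval q P ≠ 0 ∧ ∀ x, eval x P ≠ 0 →
      finrank K (specialize Φ x).ker ≤ finrank K (specialize Φ q).ker := by
  classical
  obtain ⟨U, hU⟩ := (specialize Φ q).ker.exists_isCompl
  have hinj : (specialize Φ q ∘ₗ U.subtype).ker = ⊥ := by
    rw [LinearMap.ker_comp, ← Submodule.disjoint_iff_comap_eq_bot]
    exact hU.disjoint.symm
  obtain ⟨g, hg⟩ := LinearMap.exists_leftInverse_of_injective _ hinj
  have := Fintype.ofFinite ι
  let b := finBasis K U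
  let A : Matrix (Fin (finrank K U)) ι (MvPolynomial σ K) :=
    (LinearMap.toMatrix (Pi.basisFun K ι) b g).map C
  let B : Matrix ι (Fin (finrank K U)) (MvPolynomial σ K) := Matrix.of fun l j => Φ (b j) l
  have hdet (x : σ → K) :
      eval x (A * B).det = LinearMap.det (g ∘ₗ specialize Φ x ∘ₗ U.subtype) := by
    have hA : A.map (eval x) = LinearMap.toMatrix (Pi.basisFun K ι) b g := by
      ext
      simp [A]
    have hB : B.map (eval x) =
        LinearMap.toMatrix b (Pi.basisFun K ι) (specialize Φ x ∘ₗ U.subtype) := by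
      ext
      simp [B, LinearMap.toMatrix_apply, specialize]
    rw [RingHom.map_det, RingHom.mapMatrix_apply, Matrix.map_mul, hA, hB,
      ← LinearMap.toMatrix_comp, LinearMap.det_toMatrix]
  refine ⟨(A * B).det, by rw [hdet, hg, LinearMap.det_id]; exact one_ne_zero, fun x hx => ?_⟩
  have hdisj : Disjoint (specialize Φ x).ker U := by
    rw [hdet] at hx
    have hbot := (LinearMap.isUnit_iff_ker_eq_bot _).mp
      ((LinearMap.isUnit_iff_isUnit_det _).mpr (isUnit_iff_ne_zero.mpr hx))
    rw [disjoint_comm, Submodule.disjoint_iff_comap_eq_bot, ← LinearMap.ker_comp, eq_bot_iff,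
      ← hbot]
    exact LinearMap.ker_le_ker_comp _ g
  have hker := Submodule.finrank_add_finrank_le_of_disjoint hdisj
  rw [← Submodule.finrank_add_eq_of_isCompl hU] at hker
  exact Nat.le_of_add_le_add_right hker

end Semicontinuity

section LinearSystems

variable {k : ℕ} {p : Fin k → Fin 3 → ℂ} {d d' : ℕ} {m m' : Fin k → ℕ}
  {F G : MvPolynomial (Fin 3) ℂ}

lemma mem_linSys_iff :
    F ∈ linSys p d m ↔ F.IsHomogeneous d ∧ ∀ i, F ∈ vanishingIdeal ℂ {p i} ^ m i := by
  have hequiv (i : Fin k) : F ∈ vanishingIdeal ℂ {p i} ^ m i ↔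
      ∀ ν : Fin 3 → ℕ, ν 0 + ν 1 + ν 2 < m i → aeval (p i) (mderiv ν F) = 0 := by
    rw [mem_vanishingIdeal_pow_iff, Finsupp.equivFunOnFinite.forall_congr_left]
    simp [Finsupp.degree_eq_sum, Fin.sum_univ_three]
  simp [linSys, hequiv]

instance : FiniteDimensional ℂ (homogeneousSubmodule (Fin 3) ℂ d) :=
  Module.Finite.iff_fg.mpr (homogeneousSubmodule_fg (Fin 3) ℂ d)

instance : FiniteDimensional ℂ (linSys p d m) :=
  Submodule.finiteDimensional_of_le inf_le_left

lemma mul_mem_linSys (hF : F ∈ linSys p d m) (hG : G ∈ linSys p d' m') :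
    F * G ∈ linSys p (d + d') (m + m') := by
  rw [mem_linSys_iff] at hF hG ⊢
  exact ⟨hF.1.mul hG.1, fun i => (pow_add (vanishingIdeal ℂ {p i}) _ _).symm ▸
    Ideal.mul_mem_mul (hF.2 i) (hG.2 i)⟩

lemma pow_mem_linSys (hF : F ∈ linSys p d m) (n : ℕ) : F ^ n ∈ linSys p (n * d) (n • m) := by
  rw [mem_linSys_iff] at hF ⊢
  refine ⟨mul_comm d n ▸ hF.1.pow n, fun i => ?_⟩
  rw [Pi.smul_apply, smul_eq_mul, mul_comm, pow_mul]
  exact Ideal.pow_mem_pow (hF.2 i) n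

lemma prod_mem_linSys {ι : Type*} (s : Finset ι) {F : ι → MvPolynomial (Fin 3) ℂ} {d : ι → ℕ}
    {m : ι → Fin k → ℕ} (hF : ∀ j ∈ s, F j ∈ linSys p (d j) (m j)) :
    ∏ j ∈ s, F j ∈ linSys p (∑ j ∈ s, d j) (∑ j ∈ s, m j) := by
  simp only [mem_linSys_iff] at hF ⊢
  refine ⟨IsHomogeneous.prod s F d fun j hj => (hF j hj).1, fun i => ?_⟩
  rw [Finset.sum_apply, ← Finset.prod_pow_eq_pow_sum]
  exact Ideal.prod_mem_prod fun j hj => (hF j hj).2 i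

end LinearSystems

section Dimension

lemma card_finsupp_degree_eq (σ : Type*) [Fintype σ] (n : ℕ) :
    Nat.card {ν : σ →₀ ℕ // ν.degree = n} = (Fintype.card σ).multichoose n := by
  classical
  rw [← Sym.card_sym_eq_multichoose, ← Nat.card_eq_fintype_card]
  exact Nat.card_congr (Sym.equivNatSum σ n).symm

lemma finrank_homogeneousSubmodule (σ R : Type*) [Fintype σ] [CommRing R] [Nontrivial R] (d : ℕ) :
    Module.finrank R (homogeneousSubmodule σ R d) = (Fintype.card σ).multichoose d := by
  rw [← card_finsupp_degree_eq, homogeneousSubmodule_eq_finsupp_supported]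
  exact Module.finrank_eq_nat_card_basis ⟨AddMonoidAlgebra.supportedEquivFinsupp _⟩

instance (m : ℕ) : Finite {ν : Fin 3 →₀ ℕ // ν.degree + 1 = m} :=
  ((Finsupp.finite_of_degree_le m).subset fun _ hν => hν.symm ▸ Nat.le_succ _).to_subtype

lemma multichoose_three (n : ℕ) : Nat.multichoose 3 n = (n + 2).choose 2 := by
  rw [Nat.multichoose_eq, show 3 + n - 1 = n + 2 by omega, Nat.choose_symm_add]

lemma card_finsupp_degree_add_one_eq (m : ℕ) :
    Nat.card {ν : Fin 3 →₀ ℕ // ν.degree + 1 = m} = (m + 1).choose 2 := by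
  cases m with
  | zero => simp
  | succ n =>
    simp only [Nat.add_right_cancel_iff, card_finsupp_degree_eq, Fintype.card_fin,
      multichoose_three]

variable {k : ℕ} {d : ℕ} {m : Fin k → ℕ}

lemma two_mul_virtDim (d : ℕ) (m : Fin k → ℕ) :
    2 * virtDim d m = (d * (d + 3) : ℤ) - ∑ i, (m i * (m i + 1) : ℤ) := by
  have heven (n : ℤ) : 2 * (n * (n + 1) / 2) = n * (n + 1) :=
    Int.mul_ediv_cancel' (Int.even_mul_succ_self n).two_dvd
  have hd : 2 * ((d * (d + 3) : ℤ) / 2) = d * (d + 3) := by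
    refine Int.mul_ediv_cancel' ?_
    rw [show (d * (d + 3) : ℤ) = d * (d + 1) + 2 * d by ring]
    exact dvd_add (Int.even_mul_succ_self d).two_dvd (dvd_mul_right 2 _)
  rw [virtDim, mul_sub, hd, Finset.mul_sum]
  simp only [heven]

lemma virtDim_qh {e : ℕ} (he : 1 ≤ e) :
    virtDim (10 * e) (qh (2 * e) (10 * e - 2)) = -12 * (e : ℤ) - 1 := by
  have hvirt := two_mul_virtDim (10 * e) (qh (2 * e) (10 * e - 2))
  rw [Fin.sum_univ_succ] at hvirt
  simp only [qh, if_true, Fin.succ_ne_zero, if_false, Finset.sum_const, Finset.card_univ,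
    Fintype.card_fin, nsmul_eq_mul, Nat.cast_sub (show 2 ≤ 10 * e by omega)] at hvirt
  push_cast at hvirt
  linarith

/-- The conditions imposed on forms of degree `d` by multiplicity `m i` at the `i`-th of `k`
indeterminate points, as polynomials in the coordinates of these points. Only the derivatives of
order exactly `m i - 1` occur, which is enough when `m i ≤ d + 1`. -/
noncomputable def multiplicityConditions (d : ℕ) (m : Fin k → ℕ) :
    homogeneousSubmodule (Fin 3) ℂ d →ₗ[ℂ]
      (Σ i, {ν : Fin 3 →₀ ℕ // ν.degree + 1 = m i}) → MvPolynomial (Fin k × Fin 3) ℂ :=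
  LinearMap.pi fun c => (rename (Prod.mk c.1)).toLinearMap ∘ₗ mderiv c.2.1 ∘ₗ Submodule.subtype _

lemma map_subtype_ker_specialize_multiplicityConditions (hm : ∀ i, m i ≤ d + 1)
    (p : Fin k → Fin 3 → ℂ) :
    (specialize (multiplicityConditions d m) fun x => p x.1 x.2).ker.map
      (homogeneousSubmodule (Fin 3) ℂ d).subtype = linSys p d m := by
  ext F
  have hcond (hF : F.IsHomogeneous d) :
      specialize (multiplicityConditions d m) (fun x => p x.1 x.2) ⟨F, hF⟩ = 0 ↔
        ∀ i, F ∈ vanishingIdeal ℂ {p i} ^ m i := by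
    simp [funext_iff, specialize, multiplicityConditions, eval_rename, Function.comp_def,
      Sigma.forall, fun i => mem_vanishingIdeal_pow_iff_of_isHomogeneous (p := p i) (hm i) hF]
  rw [mem_linSys_iff, Submodule.mem_map]
  constructor
  · rintro ⟨⟨F, hF⟩, hker, rfl⟩
    exact ⟨hF, (hcond hF).mp hker⟩
  · rintro ⟨hF, hmem⟩
    exact ⟨⟨F, hF⟩, (hcond hF).mpr hmem, rfl⟩

lemma finrank_ker_specialize_multiplicityConditions (hm : ∀ i, m i ≤ d + 1)
    (p : Fin k → Fin 3 → ℂ) :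
    Module.finrank ℂ (specialize (multiplicityConditions d m) fun x => p x.1 x.2).ker =
      Module.finrank ℂ (linSys p d m) := by
  rw [← map_subtype_ker_specialize_multiplicityConditions hm p, Submodule.finrank_map_subtype_eq]

lemma choose_le_finrank_linSys_add_sum (hm : ∀ i, m i ≤ d + 1) (p : Fin k → Fin 3 → ℂ) :
    (d + 2).choose 2 ≤ Module.finrank ℂ (linSys p d m) + ∑ i, (m i + 1).choose 2 := by
  let Φ := specialize (multiplicityConditions d m) fun x => p x.1 x.2
  have hforms : Module.finrank ℂ (homogeneousSubmodule (Fin 3) ℂ d) = (d + 2).choose 2 := by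
    rw [finrank_homogeneousSubmodule, Fintype.card_fin, multichoose_three]
  have hrange : Module.finrank ℂ Φ.range ≤ ∑ i, (m i + 1).choose 2 := by
    have := Fintype.ofFinite (Σ i, {ν : Fin 3 →₀ ℕ // ν.degree + 1 = m i})
    refine (Submodule.finrank_le _).trans_eq ?_
    rw [Module.finrank_fintype_fun_eq_card, ← Nat.card_eq_fintype_card, Nat.card_sigma]
    simp only [card_finsupp_degree_add_one_eq]
  rw [← hforms, ← Φ.finrank_range_add_finrank_ker,
    finrank_ker_specialize_multiplicityConditions hm p, add_comm]
  gcongr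

lemma virtDim_le_projDim (p : Fin k → Fin 3 → ℂ) : virtDim d m ≤ projDim p d m := by
  have hvirt := two_mul_virtDim d m
  have hchoose (n : ℕ) : (n * (n + 1) : ℤ) = 2 * (n + 1).choose 2 := by
    have := Nat.add_one_mul_choose_eq n 1
    rw [Nat.choose_one_right] at this
    zify at this
    linarith
  rw [projDim]
  by_cases hm : ∀ i, m i ≤ d + 1
  · have hbound := choose_le_finrank_linSys_add_sum hm p
    have hforms := hchoose (d + 1)
    simp only [hchoose, ← Finset.mul_sum] at hvirt
    zify at hbound hforms
    linarith
  · push Not at hm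
    obtain ⟨i, hi⟩ := hm
    have hsingle : (m i * (m i + 1) : ℤ) ≤ ∑ i, (m i * (m i + 1) : ℤ) :=
      Finset.single_le_sum (f := fun i => (m i * (m i + 1) : ℤ)) (fun _ _ => by positivity)
        (Finset.mem_univ i)
    have hlarge : ((d + 2) * (d + 3) : ℤ) ≤ m i * (m i + 1) := by
      have : (d + 2 : ℤ) ≤ m i := by exact_mod_cast hi
      exact mul_le_mul this (by linarith) (by positivity) (by positivity)
    linarith

end Dimension

section Existence

variable {k d : ℕ} {m : Fin k → ℕ}

lemma Generically.mono {Q Q' : (Fin k → Fin 3 → ℂ) → Prop} (hQ : Generically k Q)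
    (h : ∀ p, Q p → Q' p) : Generically k Q' :=
  let ⟨P, hP, hPQ⟩ := hQ
  ⟨P, hP, fun p hp hpP => h p (hPQ p hp hpP)⟩

lemma generically_projDim_le (hm : ∀ i, m i ≤ d + 1) (q : Fin k → Fin 3 → ℂ) :
    Generically k fun p => projDim p d m ≤ projDim q d m := by
  obtain ⟨P, hPq, hP⟩ := exists_eval_ne_zero_finrank_ker_specialize_le
    (multiplicityConditions d m) fun x => q x.1 x.2
  refine ⟨P, fun h => hPq (by simp [h]), fun p _ hp => ?_⟩
  have hle := hP _ hp
  simp only [finrank_ker_specialize_multiplicityConditions hm] at hle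
  simpa only [projDim, sub_le_sub_iff_right, Nat.cast_le] using hle

lemma zero_le_projDim_iff {p : Fin k → Fin 3 → ℂ} :
    0 ≤ projDim p d m ↔ ∃ F ∈ linSys p d m, F ≠ 0 := by
  rw [← Submodule.ne_bot_iff, ← Submodule.one_le_finrank_iff, projDim]
  omega

lemma exists_ne_zero_mem_linSys (h : 0 ≤ virtDim d m) (p : Fin k → Fin 3 → ℂ) :
    ∃ F ∈ linSys p d m, F ≠ 0 :=
  zero_le_projDim_iff.mp (h.trans (virtDim_le_projDim p))

lemma exists_line_ne_zero (p : Fin k → Fin 3 → ℂ) {i j : Fin k} (hij : i ≠ j) :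
    ∃ F ∈ linSys p 1 (Pi.single i 1 + Pi.single j 1), F ≠ 0 := by
  refine exists_ne_zero_mem_linSys ?_ p
  have hvirt := two_mul_virtDim 1 (Pi.single i 1 + Pi.single j 1 : Fin k → ℕ)
  have hsum (l : Fin k) : ((Pi.single i 1 + Pi.single j 1 : Fin k → ℕ) l : ℤ) *
      ((Pi.single i 1 + Pi.single j 1 : Fin k → ℕ) l + 1) =
        (Pi.single i 2 : Fin k → ℤ) l + (Pi.single j 2 : Fin k → ℤ) l := by
    by_cases hi : l = i
    · subst hi
      simp [hij]
    · by_cases hj : l = j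
      · subst hj
        simp [hi]
      · simp [hi, hj]
  simp only [hsum, Finset.sum_add_distrib, Finset.sum_pi_single', Finset.mem_univ, if_true,
    Nat.cast_one] at hvirt
  linarith

lemma virtDim_cons_one {e : ℕ} (he : 1 ≤ e) :
    virtDim e (Fin.cons (e - 1) fun _ => 1 : Fin (2 * e + 1) → ℕ) = 0 := by
  have hvirt := two_mul_virtDim e (Fin.cons (e - 1) fun _ => 1 : Fin (2 * e + 1) → ℕ)
  rw [Fin.sum_univ_succ] at hvirt
  simp only [Fin.cons_zero, Fin.cons_succ, Finset.sum_const, Finset.card_univ, Fintype.card_fin,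
    nsmul_eq_mul, Nat.cast_sub he] at hvirt
  push_cast at hvirt
  linarith

lemma qh_eq_two_nsmul_add_sum {e : ℕ} (he : 1 ≤ e) :
    qh (2 * e) (10 * e - 2) = 2 • (Fin.cons (e - 1) fun _ => 1 : Fin (2 * e + 1) → ℕ) +
      ∑ i : Fin (2 * e), 4 • (Pi.single 0 1 + Pi.single i.succ 1) := by
  ext i
  cases i using Fin.cases with
  | zero =>
    simp only [qh, if_true, Pi.add_apply, Pi.smul_apply, Fin.cons_zero, Finset.sum_apply,
      Pi.single_eq_same, Pi.single_eq_of_ne (Fin.succ_ne_zero _).symm, Finset.sum_const,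
      Finset.card_univ, Fintype.card_fin, smul_eq_mul]
    omega
  | succ i => simp [qh, Pi.single_apply]

/-- The member is `2C + 4 ∑ᵢ ℓᵢ`, with `C` in `L(e; e-1, 1^{2e})` and `ℓᵢ` the line `p₀pᵢ`. -/
lemma zero_le_projDim {e : ℕ} (he : 1 ≤ e) (p : Fin (2 * e + 1) → Fin 3 → ℂ) :
    0 ≤ projDim p (10 * e) (qh (2 * e) (10 * e - 2)) := by
  obtain ⟨G, hG, hG0⟩ := exists_ne_zero_mem_linSys (virtDim_cons_one he).ge p
  choose l hl hl0 using fun i : Fin (2 * e) => exists_line_ne_zero p (Fin.succ_ne_zero i).symm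
  refine zero_le_projDim_iff.mpr ⟨G ^ 2 * ∏ i, l i ^ 4, ?_,
    mul_ne_zero (pow_ne_zero 2 hG0) (Finset.prod_ne_zero_iff.mpr fun i _ => pow_ne_zero 4 (hl0 i))⟩
  have hdeg : 10 * e = 2 * e + ∑ _i : Fin (2 * e), 4 * 1 := by
    rw [Finset.sum_const, Finset.card_univ, Fintype.card_fin, smul_eq_mul]
    omega
  rw [qh_eq_two_nsmul_add_sum he, hdeg]
  exact mul_mem_linSys (pow_mem_linSys hG 2)
    (prod_mem_linSys Finset.univ fun i _ => pow_mem_linSys (hl i) 4)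

end Existence

section PolynomialsOnGraph

lemma pow_dvd_coeff_of_mem_span_pow {R : Type*} [CommRing R] {u : R} {n : ℕ} {g : Polynomial R}
    (hg : g ∈ Ideal.span {Polynomial.C u, Polynomial.X} ^ n) (k : ℕ) :
    u ^ (n - k) ∣ g.coeff k := by
  induction n generalizing g k with
  | zero => simp
  | succ n ih =>
    rw [pow_succ'] at hg
    induction hg using Submodule.mul_induction_on' with
    | mem_mul_mem x hx y hy =>
      obtain ⟨a, b, rfl⟩ := Ideal.mem_span_pair.mp hx
      rw [add_mul, mul_right_comm, mul_right_comm b, Polynomial.coeff_add, Polynomial.coeff_mul_C]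
      refine dvd_add ?_ ?_
      · refine (pow_dvd_pow u (by omega : n + 1 - k ≤ n - k + 1)).trans ?_
        rw [pow_succ]
        exact mul_dvd_mul_right (ih (Ideal.mul_mem_left _ a hy) k) u
      · cases k with
        | zero => simp
        | succ k =>
          rw [Polynomial.coeff_mul_X, Nat.add_sub_add_right]
          exact ih (Ideal.mul_mem_left _ b hy) k
    | add x _ y _ hx hy => exact (Polynomial.coeff_add x y k).symm ▸ dvd_add hx hy

lemma prod_X_sub_C_pow_dvd {K ι : Type*} [Field K] [Fintype ι] {t : ι → K}
    (ht : Function.Injective t) {k : ℕ} {f : Polynomial K}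
    (h : ∀ i, (Polynomial.X - Polynomial.C (t i)) ^ k ∣ f) :
    (∏ i, (Polynomial.X - Polynomial.C (t i))) ^ k ∣ f := by
  rw [← Finset.prod_pow]
  exact Finset.prod_dvd_of_coprime
    (fun i _ j _ hij => (Polynomial.pairwise_coprime_X_sub_C ht hij).pow) fun i _ => h i

lemma natDegree_le_sub_of_natDegree_mul_le {R : Type*} [Semiring R] [NoZeroDivisors R]
    {f g : Polynomial R} {n : ℕ} (hg : g ≠ 0) (h : (f * g).natDegree ≤ n) :
    f.natDegree ≤ n - g.natDegree := by
  obtain rfl | hf := eq_or_ne f 0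
  · simp
  · rw [Polynomial.natDegree_mul hf hg] at h
    omega

variable {K : Type*} [Field K] {n : ℕ} {P h : Polynomial K}

lemma exists_coeffs_eq_of_sq_dvd (hn : 1 ≤ n) (hP : P.natDegree = 2 * n) (hh : h.natDegree = n)
    {a b c : Polynomial K} (ha : a.natDegree ≤ 2 * n - 2) (hb : b.natDegree ≤ 2 * n - 1)
    (hc : c.natDegree ≤ 2 * n) (hval : P ^ 2 ∣ a * h ^ 2 + b * h + c)
    (hder : P ∣ 2 * a * h + b) :
    ∃ r, a = Polynomial.C r ∧ b = -2 * Polynomial.C r * h ∧ c = Polynomial.C r * h ^ 2 := by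
  have hh0 : h ≠ 0 := Polynomial.ne_zero_of_natDegree_gt (n := 0) (by omega)
  have hval0 : a * h ^ 2 + b * h + c = 0 := by
    have ha' := Polynomial.natDegree_mul_le_of_le ha (Polynomial.natDegree_pow_le_of_le 2 hh.le)
    have hb' := Polynomial.natDegree_mul_le_of_le hb hh.le
    have hdeg := Polynomial.natDegree_add_le_of_degree_le (n := 4 * n - 1)
      (Polynomial.natDegree_add_le_of_degree_le (ha'.trans (by omega)) (hb'.trans (by omega)))
      (hc.trans (by omega))
    refine Polynomial.eq_zero_of_dvd_of_natDegree_lt hval (hdeg.trans_lt ?_)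
    rw [Polynomial.natDegree_pow, hP]
    omega
  have hlin : (a * h + b).natDegree ≤ n := by
    have hprod : ((a * h + b) * h).natDegree ≤ 2 * n := by
      rwa [show (a * h + b) * h = -c by linear_combination hval0, Polynomial.natDegree_neg]
    exact (natDegree_le_sub_of_natDegree_mul_le hh0 hprod).trans (by omega)
  have hah : (a * h).natDegree ≤ 2 * n - 1 := by
    rw [← add_sub_cancel_right (a * h) b]
    exact (Polynomial.natDegree_sub_le _ _).trans (by omega)
  have hder0 : 2 * a * h + b = 0 := by
    refine Polynomial.eq_zero_of_dvd_of_natDegree_lt hder ?_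
    rw [show 2 * a * h + b = a * h + (a * h + b) by ring, hP]
    exact (Polynomial.natDegree_add_le_of_degree_le hah (hlin.trans (by omega))).trans_lt (by omega)
  have hconst : a.natDegree = 0 := by
    rw [show a * h + b = -(a * h) by linear_combination hder0, Polynomial.natDegree_neg] at hlin
    have := natDegree_le_sub_of_natDegree_mul_le hh0 hlin
    omega
  refine ⟨a.coeff 0, ?_⟩
  rw [← Polynomial.eq_C_of_natDegree_eq_zero hconst]
  exact ⟨rfl, by linear_combination hder0, by linear_combination hval0 - h * hder0⟩

lemma exists_eq_C_mul_X_sub_C_sq (hn : 1 ≤ n) (hP : P.natDegree = 2 * n) (hh : h.natDegree = n)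
    {f : Polynomial (Polynomial K)} (hf : f.natDegree ≤ 2)
    (hcoeff : ∀ k, (f.coeff k).natDegree ≤ 2 * n - k)
    (hdvd : ∀ k, P ^ (2 - k) ∣ (Polynomial.taylor h f).coeff k) :
    ∃ r, f = Polynomial.C (Polynomial.C r) * (Polynomial.X - Polynomial.C h) ^ 2 := by
  have hquad :=
    Polynomial.eq_quadratic_of_degree_le_two (Polynomial.natDegree_le_iff_degree_le.mp hf)
  have hval : f.eval h = f.coeff 2 * h ^ 2 + f.coeff 1 * h + f.coeff 0 := by
    conv_lhs => rw [hquad]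
    simp
  have hder : f.derivative.eval h = 2 * f.coeff 2 * h + f.coeff 1 := by
    conv_lhs => rw [hquad]
    simp only [Polynomial.derivative_add, Polynomial.derivative_C_mul_X_sq,
      Polynomial.derivative_C_mul_X, Polynomial.derivative_C, add_zero, Polynomial.eval_add,
      Polynomial.eval_mul, Polynomial.eval_C, Polynomial.eval_X]
    ring
  obtain ⟨r, ha, hb, hc⟩ := exists_coeffs_eq_of_sq_dvd hn hP hh (hcoeff 2) (hcoeff 1) (hcoeff 0)
    (by rw [← hval, ← Polynomial.taylor_coeff_zero]; exact hdvd 0)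
    (by rw [← hder, ← Polynomial.taylor_coeff_one, ← pow_one P]; exact hdvd 1)
  refine ⟨r, ?_⟩
  rw [hquad, ha, hb, hc]
  simp only [Polynomial.C_mul, Polynomial.C_neg, Polynomial.C_ofNat, Polynomial.C_pow]
  ring

lemma C_dvd_taylor_iff {R : Type*} [CommRing R] {a r : R} {f : Polynomial R} :
    Polynomial.C a ∣ Polynomial.taylor r f ↔ Polynomial.C a ∣ f := by
  conv_lhs => rw [← Polynomial.taylor_C r a]
  exact map_dvd_iff (Polynomial.taylorEquiv r)

lemma exists_eq_C_mul_pow_mul_X_sub_C_sq (hn : 1 ≤ n) (hP : P.natDegree = 2 * n)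
    (hh : h.natDegree = n) (j : ℕ) {f : Polynomial (Polynomial K)} (hf : f.natDegree ≤ 2)
    (hcoeff : ∀ k, (f.coeff k).natDegree ≤ 2 * (j + 1) * n - k)
    (hdvd : ∀ k, P ^ (j + 2 - k) ∣ (Polynomial.taylor h f).coeff k) :
    ∃ r, f = Polynomial.C (Polynomial.C r * P ^ j) * (Polynomial.X - Polynomial.C h) ^ 2 := by
  have hPj : P ^ j ≠ 0 := pow_ne_zero j (Polynomial.ne_zero_of_natDegree_gt (n := 0) (by omega))
  have hPf : Polynomial.C (P ^ j) ∣ f := by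
    refine C_dvd_taylor_iff.mp ((Polynomial.C_dvd_iff_dvd_coeff _ (Polynomial.taylor h f)).mpr
      fun k => ?_)
    obtain hk | hk := le_or_gt k 2
    · exact (pow_dvd_pow P (by omega)).trans (hdvd k)
    · rw [Polynomial.coeff_eq_zero_of_natDegree_lt (by rw [Polynomial.natDegree_taylor]; omega)]
      exact dvd_zero _
  obtain ⟨g, rfl⟩ := hPf
  have hg : g.natDegree ≤ 2 := by rwa [Polynomial.natDegree_C_mul hPj] at hf
  have hgcoeff (k : ℕ) : (g.coeff k).natDegree ≤ 2 * n - k := by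
    have hk := hcoeff k
    rw [Polynomial.coeff_C_mul, mul_comm] at hk
    refine (natDegree_le_sub_of_natDegree_mul_le hPj hk).trans_eq ?_
    rw [Polynomial.natDegree_pow, hP, show 2 * (j + 1) * n = j * (2 * n) + 2 * n by ring]
    omega
  have hgdvd (k : ℕ) : P ^ (2 - k) ∣ (Polynomial.taylor h g).coeff k := by
    obtain hk | hk := le_or_gt k 2
    · have := hdvd k
      rw [Polynomial.taylor_mul, Polynomial.taylor_C, Polynomial.coeff_C_mul,
        Nat.add_sub_assoc hk, pow_add] at this
      exact (mul_dvd_mul_iff_left hPj).mp this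
    · simp [Nat.sub_eq_zero_of_le hk.le]
  obtain ⟨r, hr⟩ := exists_eq_C_mul_X_sub_C_sq hn hP hh hg hgcoeff hgdvd
  refine ⟨r, ?_⟩
  rw [hr, Polynomial.C_mul]
  ring

end PolynomialsOnGraph

section AffineChart

variable {R : Type*} [CommRing R] {F : MvPolynomial (Fin 3) R} {d : ℕ}

/-- The inhomogeneous expression of a form in the affine chart `(1 : t : z)`, as a polynomial in
`z` whose coefficients are polynomials in `t`. -/
noncomputable def dehomogenize : MvPolynomial (Fin 3) R →ₐ[R] Polynomial (Polynomial R) :=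
  aeval ![1, Polynomial.C Polynomial.X, Polynomial.X]

lemma dehomogenize_monomial (s : Fin 3 →₀ ℕ) (a : R) :
    dehomogenize (monomial s a) = Polynomial.monomial (s 2) (Polynomial.monomial (s 1) a) := by
  simp [dehomogenize, aeval_monomial, Fin.prod_univ_three, Finsupp.prod_fintype,
    ← Polynomial.C_mul_X_pow_eq_monomial, Polynomial.algebraMap_apply, mul_assoc]

lemma coeff_coeff_dehomogenize (F : MvPolynomial (Fin 3) R) (k l : ℕ) :
    ((dehomogenize F).coeff k).coeff l =
      ∑ s ∈ F.support, if s 1 = l ∧ s 2 = k then coeff s F else 0 := by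
  conv_lhs => rw [F.as_sum]
  rw [map_sum, Polynomial.finsetSum_coeff, Polynomial.finsetSum_coeff]
  refine Finset.sum_congr rfl fun s _ => ?_
  rw [dehomogenize_monomial, Polynomial.coeff_monomial, apply_ite (Polynomial.coeff · l),
    Polynomial.coeff_monomial, Polynomial.coeff_zero, ← ite_and]
  simp only [and_comm]

lemma exists_mem_support_of_coeff_coeff_dehomogenize_ne_zero {k l : ℕ}
    (h : ((dehomogenize F).coeff k).coeff l ≠ 0) : ∃ s ∈ F.support, s 1 = l ∧ s 2 = k := by
  rw [coeff_coeff_dehomogenize] at h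
  obtain ⟨s, hs, hne⟩ := Finset.exists_ne_zero_of_sum_ne_zero h
  exact ⟨s, hs, (ite_ne_right_iff.mp hne).1⟩

lemma coeff_coeff_dehomogenize_of_isHomogeneous (hF : F.IsHomogeneous d) {s : Fin 3 →₀ ℕ}
    (hs : s.degree = d) : ((dehomogenize F).coeff (s 2)).coeff (s 1) = coeff s F := by
  rw [coeff_coeff_dehomogenize, Finset.sum_eq_single s]
  · rw [if_pos ⟨rfl, rfl⟩]
  · intro s' hs' hne
    refine if_neg fun ⟨h1, h2⟩ => hne (Finsupp.ext fun i => ?_)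
    have hd := degree_eq_of_mem_support hF hs'
    rw [← hs, Finsupp.degree_eq_sum, Finsupp.degree_eq_sum, Fin.sum_univ_three,
      Fin.sum_univ_three] at hd
    obtain rfl | rfl | rfl : i = 0 ∨ i = 1 ∨ i = 2 := by omega
    all_goals omega
  · intro h
    simp [notMem_support_iff.mp h]

lemma eq_zero_of_dehomogenize_eq_zero (hF : F.IsHomogeneous d) (h : dehomogenize F = 0) :
    F = 0 := by
  ext s
  by_cases hs : s.degree = d
  · rw [← coeff_coeff_dehomogenize_of_isHomogeneous hF hs, h]
    simp
  · rw [hF.coeff_eq_zero hs, coeff_zero]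

lemma natDegree_coeff_dehomogenize_le (hF : F.IsHomogeneous d) (k : ℕ) :
    ((dehomogenize F).coeff k).natDegree ≤ d - k := by
  refine Polynomial.natDegree_le_iff_coeff_eq_zero.mpr fun l hl => ?_
  by_contra h
  obtain ⟨s, hs, rfl, rfl⟩ := exists_mem_support_of_coeff_coeff_dehomogenize_ne_zero h
  have hd := degree_eq_of_mem_support hF hs
  rw [Finsupp.degree_eq_sum, Fin.sum_univ_three] at hd
  omega

lemma taylor_dehomogenize (h : Polynomial R) (F : MvPolynomial (Fin 3) R) :
    Polynomial.taylor h (dehomogenize F) =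
      aeval (![1, Polynomial.C Polynomial.X, Polynomial.X + Polynomial.C h] :
        Fin 3 → Polynomial (Polynomial R)) F := by
  have hcomp : ((Polynomial.taylorAlgHom h).restrictScalars R).comp dehomogenize =
      aeval (![1, Polynomial.C Polynomial.X, Polynomial.X + Polynomial.C h] :
        Fin 3 → Polynomial (Polynomial R)) := by
    refine algHom_ext fun j => ?_
    fin_cases j <;> simp [dehomogenize]
  exact DFunLike.congr_fun hcomp F

lemma natDegree_dehomogenize_le {F : MvPolynomial (Fin 3) ℂ} {m : ℕ} (hF : F.IsHomogeneous d)
    (hFm : F ∈ vanishingIdeal ℂ {(Pi.single 2 1 : Fin 3 → ℂ)} ^ m) :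
    (dehomogenize F).natDegree ≤ d - m := by
  refine Polynomial.natDegree_le_iff_coeff_eq_zero.mpr fun k hk => Polynomial.ext fun l => ?_
  by_contra h
  obtain ⟨s, hs, rfl, rfl⟩ := exists_mem_support_of_coeff_coeff_dehomogenize_ne_zero h
  refine mem_support_iff.mp hs (coeff_eq_zero_of_mem_vanishingIdeal_single_pow hF hFm ?_)
  have hd := degree_eq_of_mem_support hF hs
  rw [← Finsupp.single_add_erase 2 s, map_add, Finsupp.degree_single] at hd
  omega

lemma pow_dvd_coeff_taylor_dehomogenize {K : Type*} [Field K] {h : Polynomial K} {t : K} {n : ℕ}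
    {F : MvPolynomial (Fin 3) K} (hF : F ∈ vanishingIdeal K {![1, t, h.eval t]} ^ n) (k : ℕ) :
    (Polynomial.X - Polynomial.C t) ^ (n - k) ∣
      (Polynomial.taylor h (dehomogenize F)).coeff k := by
  rw [taylor_dehomogenize]
  refine pow_dvd_coeff_of_mem_span_pow (aeval_mem_pow_of_mem_vanishingIdeal_pow (fun j => ?_) hF) k
  obtain ⟨w, hw⟩ := Polynomial.X_sub_C_dvd_sub_C_eval (p := h) (a := t)
  rw [Ideal.mem_span_pair]
  fin_cases j
  · exact ⟨0, 0, by simp⟩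
  · exact ⟨1, 0, by simp [Polynomial.algebraMap_apply]⟩
  · refine ⟨Polynomial.C w, 1, ?_⟩
    have hC := congrArg (Polynomial.C (R := Polynomial K)) hw
    simp only [map_sub, map_mul] at hC
    simp only [Fin.reduceFinMk, Matrix.cons_val, map_sub, Polynomial.algebraMap_apply,
      Polynomial.algebraMap_eq]
    linear_combination -hC

end AffineChart

section SpecialConfiguration

variable {n : ℕ}

/-- The point `(0 : 0 : 1)` and the points `(1 : tᵢ : h(tᵢ))` on the graph `z = h(t)`. -/
noncomputable def graphConfig (h : Polynomial ℂ) (t : Fin n → ℂ) : Fin (n + 1) → Fin 3 → ℂ :=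
  Fin.cons (Pi.single 2 1) fun i => ![1, t i, h.eval (t i)]

lemma exists_dehomogenize_eq_of_mem_linSys_graphConfig {e : ℕ} (he : 1 ≤ e) {h : Polynomial ℂ}
    (hh : h.natDegree = e) {t : Fin (2 * e) → ℂ} (ht : Function.Injective t)
    {F : MvPolynomial (Fin 3) ℂ}
    (hF : F ∈ linSys (graphConfig h t) (10 * e) (qh (2 * e) (10 * e - 2))) :
    ∃ r, dehomogenize F =
      Polynomial.C (Polynomial.C r * (∏ i, (Polynomial.X - Polynomial.C (t i))) ^ 4) *
        (Polynomial.X - Polynomial.C h) ^ 2 := by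
  obtain ⟨hhom, hmult⟩ := mem_linSys_iff.mp hF
  have hvertex : F ∈ vanishingIdeal ℂ {(Pi.single 2 1 : Fin 3 → ℂ)} ^ (10 * e - 2) := hmult 0
  have hgraph (i : Fin (2 * e)) : F ∈ vanishingIdeal ℂ {![1, t i, h.eval (t i)]} ^ 6 := hmult i.succ
  refine exists_eq_C_mul_pow_mul_X_sub_C_sq he ?_ hh 4 ?_ (fun k => ?_) fun k => ?_
  · rw [Polynomial.natDegree_finsetProd_X_sub_C_eq_card, Finset.card_univ, Fintype.card_fin]
  · exact (natDegree_dehomogenize_le hhom hvertex).trans (by omega)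
  · exact (natDegree_coeff_dehomogenize_le hhom k).trans (by omega)
  · exact prod_X_sub_C_pow_dvd ht fun i => pow_dvd_coeff_taylor_dehomogenize (hgraph i) k

lemma projDim_graphConfig_le_zero {e : ℕ} (he : 1 ≤ e) {h : Polynomial ℂ}
    (hh : h.natDegree = e) {t : Fin (2 * e) → ℂ} (ht : Function.Injective t) :
    projDim (graphConfig h t) (10 * e) (qh (2 * e) (10 * e - 2)) ≤ 0 := by
  let G : Polynomial (Polynomial ℂ) :=
    Polynomial.C ((∏ i, (Polynomial.X - Polynomial.C (t i))) ^ 4) *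
      (Polynomial.X - Polynomial.C h) ^ 2
  have hspan (F : linSys (graphConfig h t) (10 * e) (qh (2 * e) (10 * e - 2))) :
      dehomogenize (F : MvPolynomial (Fin 3) ℂ) ∈ Submodule.span ℂ {G} := by
    obtain ⟨r, hr⟩ := exists_dehomogenize_eq_of_mem_linSys_graphConfig he hh ht F.2
    refine Submodule.mem_span_singleton.mpr ⟨r, ?_⟩
    rw [hr, Algebra.smul_def, Polynomial.C_mul, mul_assoc]
    rfl
  let Ψ := (dehomogenize.toLinearMap ∘ₗ Submodule.subtype _).codRestrict _ hspan
  have hΨ : Function.Injective Ψ := by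
    refine (injective_iff_map_eq_zero Ψ).mpr fun F hF => Subtype.ext ?_
    exact eq_zero_of_dehomogenize_eq_zero (mem_linSys_iff.mp F.2).1 (congrArg Subtype.val hF)
  have hle := (LinearMap.finrank_le_finrank_of_injective hΨ).trans (finrank_span_le_card {G})
  rw [Set.toFinset_singleton, Finset.card_singleton] at hle
  rw [projDim]
  omega

end SpecialConfiguration

theorem special_L_10e_10esub2 (e : ℕ) (he : 1 ≤ e) :
    virtDim (10 * e) (qh (2 * e) (10 * e - 2)) = -12 * (e : ℤ) - 1 ∧
    Generically (2 * e + 1) (fun p =>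
      projDim p (10 * e) (qh (2 * e) (10 * e - 2)) = 0 ∧
      projDim p (10 * e) (qh (2 * e) (10 * e - 2)) >
        max (-1) (virtDim (10 * e) (qh (2 * e) (10 * e - 2)))) := by
  have hm (i : Fin (2 * e + 1)) : qh (2 * e) (10 * e - 2) i ≤ 10 * e + 1 := by
    rw [qh]
    split_ifs <;> omega
  have ht : Function.Injective fun i : Fin (2 * e) => ((i : ℕ) : ℂ) :=
    Nat.cast_injective.comp Fin.val_injective
  have hspecial := projDim_graphConfig_le_zero he (Polynomial.natDegree_X_pow e) ht
  refine ⟨virtDim_qh he, (generically_projDim_le hm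
    (graphConfig (Polynomial.X ^ e) fun i => ((i : ℕ) : ℂ))).mono fun p hp => ?_⟩
  have h0 : projDim p (10 * e) (qh (2 * e) (10 * e - 2)) = 0 :=
    (hp.trans hspecial).antisymm (zero_le_projDim he p)
  refine ⟨h0, ?_⟩
  rw [h0, virtDim_qh he, gt_iff_lt, max_lt_iff]
  omega
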